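/- With the data below, for every α ∈ (η₁, η₂) one has D(α) > 0, the function α ↦ D(α) is strictly increasing on (η₁, η₂), and the function α ↦ N(α)/D(α) is strictly decreasing on (η₁, η₂). -/

import Mathlib

/-- Complete elliptic integral of the first kind:
`K(k) = ∫₀¹ ds/√((1−s²)(1−k²s²))`. -/
noncomputable def ellK (k : ℝ) : ℝ :=
  ∫ s in (0 : ℝ)..1, 1 / Real.sqrt ((1 - s ^ 2) * (1 - k ^ 2 * s ^ 2))

/-- Complete elliptic integral of the third kind:
`Π(m,k) = ∫₀¹ ds/((1−ms²)√((1−s²)(1−k²s²)))`. -/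
noncomputable def ellPi (m k : ℝ) : ℝ :=
  ∫ s in (0 : ℝ)..1, 1 / ((1 - m * s ^ 2) * Real.sqrt ((1 - s ^ 2) * (1 - k ^ 2 * s ^ 2)))

/-- `l(x) = (x−1)/(x+1)`. -/
noncomputable def lpar (x : ℝ) : ℝ := (x - 1) / (x + 1)

/-- `k(α) = l₁/l(α)` (with `l₁ = l(η₁)`). -/
noncomputable def kfun (η₁ α : ℝ) : ℝ := lpar η₁ / lpar α

/-- `ρ_α(s) = √((η₁−s)(s−η₁⁻¹)(α−s)(s−α⁻¹))`. -/
noncomputable def rho (η₁ α s : ℝ) : ℝ :=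
  Real.sqrt ((η₁ - s) * (s - η₁⁻¹) * (α - s) * (s - α⁻¹))

/-- `Q(α) = (∫_{η₁⁻¹}^{η₁} (s²+s⁻²)/ρ_α(s) ds)/(∫_{η₁⁻¹}^{η₁} ds/ρ_α(s))`. -/
noncomputable def Qfun (η₁ α : ℝ) : ℝ :=
  (∫ s in η₁⁻¹..η₁, (s ^ 2 + (s⁻¹) ^ 2) / rho η₁ α s) /
    (∫ s in η₁⁻¹..η₁, 1 / rho η₁ α s)

/-- `D(α) = α + α⁻¹ + 2 − 4Π(l₁², k(α))/K(k(α))`. -/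
noncomputable def Dfun (η₁ α : ℝ) : ℝ :=
  α + α⁻¹ + 2 - 4 * ellPi (lpar η₁ ^ 2) (kfun η₁ α) / ellK (kfun η₁ α)

/-- `N(α) = −α² − α⁻² + ((α + α⁻¹ + η₁ + η₁⁻¹)/2)·D(α) + Q(α)`. -/
noncomputable def Nfun (η₁ α : ℝ) : ℝ :=
  -α ^ 2 - (α⁻¹) ^ 2 + (α + α⁻¹ + η₁ + η₁⁻¹) / 2 * Dfun η₁ α + Qfun η₁ α

/-!
Put `A = α + α⁻¹` and `X(t) = s + s⁻¹`, where `s = (1 + l t) / (1 - l t)` and `l = lpar η₁`. Since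
`(α - s)(s - α⁻¹) = s (A - X)`, in the variable `t` all the elliptic integrals become moments
`J_p(A) = ∫ (A - X)^p dμ` over one finite measure `dμ = dt / √((1 - t²)(1 - l² t²))` which does not
depend on `α`, and the normalising factors cancel in the quotients:
`D = J_{1/2} / J_{-1/2}` and `N / D = J_{3/2} / J_{1/2} - (3/2) A + const`.

For `-1 < p ≤ 0` the quotient `J_{p+1} / J_p` increases because its numerator increases and its
denominator decreases. For `p > 0` the tangent line inequality for `y ↦ y^(p+1)` gives
`J_{p+1}(B) ≤ J_{p+1}(A) + (p+1)(B - A) J_p(B)`, so for `A < B` dividing by `J_p(B) > J_p(A)` shows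
that `J_{p+1} / J_p - (p+1) A` decreases. The theorem is the case `p = ∓1/2`.
-/

open MeasureTheory Set Real

section ShiftedMoment

variable {Ω : Type*} [MeasurableSpace Ω] {μ : Measure Ω} {X : Ω → ℝ} {a b A B p : ℝ}

lemma integral_lt_integral_of_ae_lt [NeZero μ] {f g : Ω → ℝ} (hf : Integrable f μ)
    (hg : Integrable g μ) (hfg : ∀ᵐ ω ∂μ, f ω < g ω) : ∫ ω, f ω ∂μ < ∫ ω, g ω ∂μ := by
  have hle : f ≤ᵐ[μ] g := hfg.mono fun _ => le_of_lt
  refine (integral_mono_ae hf hg hle).lt_of_ne fun heq => ?_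
  obtain ⟨ω, hlt, heq⟩ := (hfg.and ((integral_eq_iff_of_ae_le hf hg hle).mp heq)).exists
  exact hlt.ne heq

/-- The moment `∫ (A - X)^p dμ` of a real random variable `X`, as a function of the shift `A`. It is
meant for `A` above the essential supremum of `X`, where the real power is the genuine one. -/
noncomputable def shiftedMoment (μ : Measure Ω) (X : Ω → ℝ) (p A : ℝ) : ℝ :=
  ∫ ω, (A - X ω) ^ p ∂μ

lemma integrable_sub_rpow [IsFiniteMeasure μ] (hX : AEMeasurable X μ)
    (hXab : ∀ᵐ ω ∂μ, X ω ∈ Icc a b) (hA : b < A) (p : ℝ) :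
    Integrable (fun ω => (A - X ω) ^ p) μ := by
  have hcont : ContinuousOn (fun y : ℝ => y ^ p) (Icc (A - b) (A - a)) :=
    continuousOn_id.rpow_const fun y hy => Or.inl ((sub_pos.mpr hA).trans_le hy.1).ne'
  obtain ⟨C, hC⟩ := isCompact_Icc.exists_bound_of_continuousOn hcont
  refine .of_bound ((hX.const_sub A).pow_const p).aestronglyMeasurable C ?_
  filter_upwards [hXab] with ω hω
  exact hC _ ⟨sub_le_sub_left hω.2 A, sub_le_sub_left hω.1 A⟩

lemma shiftedMoment_pos [IsFiniteMeasure μ] [NeZero μ] (hX : AEMeasurable X μ)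
    (hXab : ∀ᵐ ω ∂μ, X ω ∈ Icc a b) (hA : b < A) (p : ℝ) : 0 < shiftedMoment μ X p A := by
  have hpos : ∀ᵐ ω ∂μ, 0 < (A - X ω) ^ p := by
    filter_upwards [hXab] with ω hω
    exact rpow_pos_of_pos (sub_pos.mpr (hω.2.trans_lt hA)) p
  simpa [shiftedMoment] using
    integral_lt_integral_of_ae_lt (integrable_zero _ _ _) (integrable_sub_rpow hX hXab hA p) hpos

lemma strictMonoOn_shiftedMoment [IsFiniteMeasure μ] [NeZero μ] (hX : AEMeasurable X μ)
    (hXab : ∀ᵐ ω ∂μ, X ω ∈ Icc a b) (hp : 0 < p) :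
    StrictMonoOn (shiftedMoment μ X p) (Ioi b) := by
  intro A hA B hB hAB
  refine integral_lt_integral_of_ae_lt (integrable_sub_rpow hX hXab hA p)
    (integrable_sub_rpow hX hXab hB p) ?_
  filter_upwards [hXab] with ω hω
  have hXA : X ω < A := hω.2.trans_lt hA
  exact rpow_lt_rpow (sub_pos.mpr hXA).le (sub_lt_sub_right hAB _) hp

lemma antitoneOn_shiftedMoment [IsFiniteMeasure μ] (hX : AEMeasurable X μ)
    (hXab : ∀ᵐ ω ∂μ, X ω ∈ Icc a b) (hp : p ≤ 0) :
    AntitoneOn (shiftedMoment μ X p) (Ioi b) := by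
  intro A hA B hB hAB
  refine integral_mono_ae (integrable_sub_rpow hX hXab hB p)
    (integrable_sub_rpow hX hXab hA p) ?_
  filter_upwards [hXab] with ω hω
  have hXA : X ω < A := hω.2.trans_lt hA
  exact rpow_le_rpow_of_nonpos (sub_pos.mpr hXA) (sub_le_sub_right hAB _) hp

theorem strictMonoOn_shiftedMoment_add_one_div [IsFiniteMeasure μ] [NeZero μ]
    (hX : AEMeasurable X μ) (hXab : ∀ᵐ ω ∂μ, X ω ∈ Icc a b) (hp : p ∈ Ioc (-1) 0) :
    StrictMonoOn (fun A => shiftedMoment μ X (p + 1) A / shiftedMoment μ X p A) (Ioi b) := by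
  intro A hA B hB hAB
  exact div_lt_div₀
    (strictMonoOn_shiftedMoment hX hXab (neg_lt_iff_pos_add.mp hp.1) hA hB hAB)
    (antitoneOn_shiftedMoment hX hXab hp.2 hA hB hAB.le)
    (shiftedMoment_pos hX hXab hB _).le (shiftedMoment_pos hX hXab hB _)

lemma rpow_add_one_le_rpow_add_one_add {x y : ℝ} (hx : 0 ≤ x) (hy : 0 < y) (hp : 0 ≤ p) :
    y ^ (p + 1) ≤ x ^ (p + 1) + (p + 1) * (y - x) * y ^ p := by
  have bernoulli : 1 + (p + 1) * (x / y - 1) ≤ (x / y) ^ (p + 1) := by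
    simpa using one_add_mul_self_le_rpow_one_add (s := x / y - 1)
      (by linarith [div_nonneg hx hy.le]) (le_add_of_nonneg_left hp)
  rw [div_rpow hx hy.le, le_div_iff₀ (rpow_pos_of_pos hy _), rpow_add_one hy.ne'] at bernoulli
  rw [rpow_add_one hy.ne']
  have expand : (1 + (p + 1) * (x / y - 1)) * (y ^ p * y)
      = y ^ p * y - (p + 1) * (y - x) * y ^ p := by
    field_simp
    ring
  linarith

lemma shiftedMoment_add_one_le [IsFiniteMeasure μ] (hX : AEMeasurable X μ)
    (hXab : ∀ᵐ ω ∂μ, X ω ∈ Icc a b) (hp : 0 ≤ p) (hA : b < A) (hB : b < B) :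
    shiftedMoment μ X (p + 1) B ≤
      shiftedMoment μ X (p + 1) A + (p + 1) * (B - A) * shiftedMoment μ X p B := by
  have hintA := integrable_sub_rpow hX hXab hA (p + 1)
  have hintB := (integrable_sub_rpow hX hXab hB p).const_mul ((p + 1) * (B - A))
  unfold shiftedMoment
  rw [← integral_const_mul, ← integral_add hintA hintB]
  refine integral_mono_ae (integrable_sub_rpow hX hXab hB _) (hintA.add hintB) ?_
  filter_upwards [hXab] with ω hω
  simpa using rpow_add_one_le_rpow_add_one_add (sub_pos.mpr (hω.2.trans_lt hA)).le
    (sub_pos.mpr (hω.2.trans_lt hB)) hp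

theorem strictAntiOn_shiftedMoment_add_one_div_sub [IsFiniteMeasure μ] [NeZero μ]
    (hX : AEMeasurable X μ) (hXab : ∀ᵐ ω ∂μ, X ω ∈ Icc a b) (hp : 0 < p) :
    StrictAntiOn (fun A => shiftedMoment μ X (p + 1) A / shiftedMoment μ X p A - (p + 1) * A)
      (Ioi b) := by
  intro A hA B hB hAB
  have hposA := shiftedMoment_pos hX hXab hA p
  have hposB := shiftedMoment_pos hX hXab hB p
  have hstep : shiftedMoment μ X (p + 1) B / shiftedMoment μ X p B
      ≤ shiftedMoment μ X (p + 1) A / shiftedMoment μ X p B + (p + 1) * (B - A) := by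
    rw [div_add' _ _ _ hposB.ne']
    gcongr
    exact shiftedMoment_add_one_le hX hXab hp.le hA hB
  have hdenom : shiftedMoment μ X (p + 1) A / shiftedMoment μ X p B
      < shiftedMoment μ X (p + 1) A / shiftedMoment μ X p A :=
    div_lt_div_of_pos_left (shiftedMoment_pos hX hXab hA _) hposA
      (strictMonoOn_shiftedMoment hX hXab hp hA hB hAB)
  linarith

lemma integral_add_const_mul_sub_rpow [IsFiniteMeasure μ] (hX : AEMeasurable X μ)
    (hXab : ∀ᵐ ω ∂μ, X ω ∈ Icc a b) (hA : b < A) (c p : ℝ) :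
    ∫ ω, (X ω + c) * (A - X ω) ^ p ∂μ =
      (A + c) * shiftedMoment μ X p A - shiftedMoment μ X (p + 1) A := by
  have hint := integrable_sub_rpow hX hXab hA
  unfold shiftedMoment
  rw [← integral_const_mul, ← integral_sub ((hint p).const_mul _) (hint _)]
  refine integral_congr_ae ?_
  filter_upwards [hXab] with ω hω
  have hXA : X ω < A := hω.2.trans_lt hA
  rw [rpow_add_one (sub_pos.mpr hXA).ne']
  ring

lemma integral_sq_add_const_mul_sub_rpow [IsFiniteMeasure μ] (hX : AEMeasurable X μ)
    (hXab : ∀ᵐ ω ∂μ, X ω ∈ Icc a b) (hA : b < A) (c p : ℝ) :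
    ∫ ω, (X ω ^ 2 + c) * (A - X ω) ^ p ∂μ = (A ^ 2 + c) * shiftedMoment μ X p A
      - 2 * A * shiftedMoment μ X (p + 1) A + shiftedMoment μ X (p + 2) A := by
  have hint := integrable_sub_rpow hX hXab hA
  have hint₀ := (hint p).const_mul (A ^ 2 + c)
  have hint₁ := (hint (p + 1)).const_mul (2 * A)
  unfold shiftedMoment
  rw [← integral_const_mul, ← integral_const_mul, ← integral_sub hint₀ hint₁,
    ← integral_add (by exact hint₀.sub hint₁) (hint _)]
  refine integral_congr_ae ?_
  filter_upwards [hXab] with ω hω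
  have hXA : 0 < A - X ω := sub_pos.mpr (hω.2.trans_lt hA)
  rw [rpow_add_one hXA.ne', rpow_add hXA, rpow_two]
  ring

end ShiftedMoment

section Joukowski

/-- The Joukowski map `x ↦ x + x⁻¹`.
Its value at `α` is the shift parameter of all the moments below. -/
noncomputable def joukowski (x : ℝ) : ℝ := x + x⁻¹

/-- The Cayley map `u ↦ (1 + u) / (1 - u)`, inverse to `lpar`. -/
noncomputable def cayley (u : ℝ) : ℝ := (1 + u) / (1 - u)

lemma strictMonoOn_joukowski : StrictMonoOn joukowski (Ici 1) := by
  intro x (hx : 1 ≤ x) y (hy : 1 ≤ y) hxy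
  have : 0 < x := by linarith
  have : 0 < y := by linarith
  have hxy1 : 0 < x * y - 1 := by nlinarith
  have factor : joukowski y - joukowski x = (y - x) * (x * y - 1) / (x * y) := by
    unfold joukowski
    field_simp
    ring
  have : 0 < joukowski y - joukowski x := by
    rw [factor]
    have := sub_pos.mpr hxy
    positivity
  linarith

lemma sub_mul_sub_inv {x s : ℝ} (hx : x ≠ 0) (hs : s ≠ 0) :
    (x - s) * (s - x⁻¹) = s * (joukowski x - joukowski s) := by
  unfold joukowski
  field_simp
  ring

lemma sq_add_inv_sq {s : ℝ} (hs : s ≠ 0) : s ^ 2 + s⁻¹ ^ 2 = joukowski s ^ 2 - 2 := by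
  unfold joukowski
  field_simp
  ring

lemma cayley_pos {u : ℝ} (hu : u ∈ Ioo (-1) 1) : 0 < cayley u :=
  div_pos (by linarith [hu.1]) (by linarith [hu.2])

lemma cayley_neg (u : ℝ) : cayley (-u) = (cayley u)⁻¹ := by
  simp [cayley, sub_eq_add_neg]

lemma cayley_lpar {x : ℝ} (hx : x ≠ -1) : cayley (lpar x) = x := by
  have : x + 1 ≠ 0 := by rwa [Ne, add_eq_zero_iff_eq_neg]
  unfold cayley lpar
  field_simp
  ring

lemma lpar_mem_Ioo {x : ℝ} (hx : 1 < x) : lpar x ∈ Ioo 0 1 :=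
  ⟨div_pos (by linarith) (by linarith), (div_lt_one (by linarith)).mpr (by linarith)⟩

lemma lpar_sq {x : ℝ} (hx : 0 < x) : lpar x ^ 2 = (joukowski x - 2) / (joukowski x + 2) := by
  have : 0 < joukowski x + 2 := by unfold joukowski; positivity
  unfold lpar
  rw [div_pow, div_eq_div_iff (by positivity) this.ne']
  unfold joukowski
  field_simp
  ring

lemma joukowski_cayley {u : ℝ} (hu : u ^ 2 ≠ 1) : joukowski (cayley u) = 4 / (1 - u ^ 2) - 2 := by
  have hm : 1 - u ≠ 0 := fun h => hu (by linear_combination (-1 - u) * h)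
  have hp : 1 + u ≠ 0 := fun h => hu (by linear_combination (u - 1) * h)
  rw [show 1 - u ^ 2 = (1 - u) * (1 + u) by ring]
  unfold joukowski cayley
  field_simp
  ring

lemma hasDerivAt_cayley {u : ℝ} (hu : u ≠ 1) : HasDerivAt cayley (2 / (1 - u) ^ 2) u := by
  have hd := ((hasDerivAt_id u).const_add 1).div ((hasDerivAt_id u).const_sub 1)
    (sub_ne_zero.mpr hu.symm)
  refine hd.congr_deriv ?_
  simp only [id]
  ring

/-- The even function `t ↦ s + s⁻¹` of the Legendre variable `t` of modulus `l`, where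
`s = cayley (l * t)`. -/
noncomputable def legendreVar (l t : ℝ) : ℝ := joukowski (cayley (l * t))

lemma legendreVar_even (l : ℝ) : (legendreVar l).Even := by
  intro t
  simp [legendreVar, cayley_neg, joukowski, add_comm]

lemma measurable_legendreVar (l : ℝ) : Measurable (legendreVar l) := by
  unfold legendreVar joukowski cayley
  fun_prop

variable {l t : ℝ}

lemma one_sub_sq_mul_sq_pos (hl : l ^ 2 < 1) (ht : t ∈ Icc (-1) 1) : 0 < 1 - l ^ 2 * t ^ 2 := by
  have ht2 : t ^ 2 ≤ 1 := by rw [sq_le_one_iff_abs_le_one, abs_le]; exact ht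
  nlinarith [sq_nonneg l]

lemma legendreVar_eq (hl : l ^ 2 < 1) (ht : t ∈ Icc (-1) 1) :
    legendreVar l t = 4 / (1 - l ^ 2 * t ^ 2) - 2 := by
  have := one_sub_sq_mul_sq_pos hl ht
  rw [legendreVar, joukowski_cayley (by rw [mul_pow]; linarith), mul_pow]

lemma legendreVar_mem_Icc (hl : l ^ 2 < 1) (ht : t ∈ Icc (-1) 1) :
    legendreVar l t ∈ Icc 2 (joukowski (cayley l)) := by
  have ht2 : t ^ 2 ≤ 1 := by rw [sq_le_one_iff_abs_le_one, abs_le]; exact ht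
  have hden := one_sub_sq_mul_sq_pos hl ht
  have hle : 1 - l ^ 2 ≤ 1 - l ^ 2 * t ^ 2 := by nlinarith [sq_nonneg l]
  rw [legendreVar_eq hl ht, joukowski_cayley hl.ne]
  constructor
  · have : 4 ≤ 4 / (1 - l ^ 2 * t ^ 2) := by
      rw [le_div_iff₀ hden]
      nlinarith [mul_nonneg (sq_nonneg l) (sq_nonneg t)]
    linarith
  · have : 0 < 1 - l ^ 2 := sub_pos.mpr hl
    gcongr

lemma joukowski_cayley_sub_legendreVar (hl : l ^ 2 < 1) (ht : t ∈ Icc (-1) 1) :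
    joukowski (cayley l) - legendreVar l t =
      4 * l ^ 2 * (1 - t ^ 2) / ((1 - l ^ 2) * (1 - l ^ 2 * t ^ 2)) := by
  have := one_sub_sq_mul_sq_pos hl ht
  have : 0 < 1 - l ^ 2 := sub_pos.mpr hl
  rw [legendreVar_eq hl ht, joukowski_cayley hl.ne]
  field_simp
  ring

end Joukowski

section LegendreMeasure

variable {l : ℝ}

/-- The measure `dt / √((1 - t²)(1 - l²t²))` on `(0, 1]`, of total mass `ellK l`. -/
noncomputable def legendreMeasure (l : ℝ) : Measure ℝ :=
  (volume.restrict (Ioc 0 1)).withDensity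
    fun t => ENNReal.ofReal (√((1 - t ^ 2) * (1 - l ^ 2 * t ^ 2)))⁻¹

lemma integral_legendreMeasure (l : ℝ) (f : ℝ → ℝ) :
    ∫ t, f t ∂legendreMeasure l =
      ∫ t in (0 : ℝ)..1, f t / √((1 - t ^ 2) * (1 - l ^ 2 * t ^ 2)) := by
  rw [legendreMeasure, integral_withDensity_eq_integral_toReal_smul (by fun_prop) (by simp),
    intervalIntegral.integral_of_le zero_le_one]
  congr with t
  rw [ENNReal.toReal_ofReal (by positivity), smul_eq_mul, inv_mul_eq_div]

lemma ae_legendreMeasure (l : ℝ) {P : ℝ → Prop} (hP : ∀ t ∈ Ioc 0 1, P t) :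
    ∀ᵐ t ∂legendreMeasure l, P t :=
  (withDensity_absolutelyContinuous _ _).ae_le (ae_restrict_of_forall_mem measurableSet_Ioc hP)

lemma intervalIntegrable_legendre (hl : l ^ 2 < 1) :
    IntervalIntegrable (fun t => (√((1 - t ^ 2) * (1 - l ^ 2 * t ^ 2)))⁻¹) volume (-1) 1 := by
  have hcont : ContinuousOn (fun t => (√(1 - l ^ 2 * t ^ 2))⁻¹) (uIcc (-1) 1) := by
    rw [uIcc_of_le (by norm_num)]
    exact ContinuousOn.inv₀ (by fun_prop) fun t ht =>
      (sqrt_pos.mpr (one_sub_sq_mul_sq_pos hl ht)).ne'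
  refine (Polynomial.Chebyshev.intervalIntegrable_sqrt_one_sub_sq_inv.mul_continuousOn
    hcont).congr fun t ht => ?_
  rw [uIoc_of_le (by norm_num)] at ht
  rw [sqrt_mul' _ (one_sub_sq_mul_sq_pos hl (Ioc_subset_Icc_self ht)).le, mul_inv, sqrt_inv]

lemma isFiniteMeasure_legendreMeasure (hl : l ^ 2 < 1) : IsFiniteMeasure (legendreMeasure l) := by
  have hint := (intervalIntegrable_legendre hl).1.mono_set
    (Ioc_subset_Ioc_left (by norm_num : (-1 : ℝ) ≤ 0))
  exact isFiniteMeasure_withDensity_ofReal hint.hasFiniteIntegral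

lemma neZero_legendreMeasure (hl : l ^ 2 < 1) : NeZero (legendreMeasure l) := by
  refine ⟨fun hzero => ?_⟩
  have hvanish := withDensity_eq_zero (by fun_prop) hzero
  rw [Filter.EventuallyEq, ← restrict_Ioo_eq_restrict_Ioc,
    ae_restrict_iff' measurableSet_Ioo] at hvanish
  have : ∀ᵐ t : ℝ, t ∉ Ioo 0 1 := by
    filter_upwards [hvanish] with t ht ht01
    have h1 : 0 < 1 - t ^ 2 := by nlinarith [ht01.1, ht01.2]
    have h2 := one_sub_sq_mul_sq_pos hl (t := t) ⟨by linarith [ht01.1], ht01.2.le⟩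
    have h3 : 0 < (√((1 - t ^ 2) * (1 - l ^ 2 * t ^ 2)))⁻¹ := by positivity
    simpa [h3.not_ge] using ht ht01
  simpa using measure_eq_zero_iff_ae_notMem.mpr this

lemma ae_legendreVar_mem_Icc (hl : l ^ 2 < 1) :
    ∀ᵐ t ∂legendreMeasure l, legendreVar l t ∈ Icc 2 (joukowski (cayley l)) :=
  ae_legendreMeasure l fun _ ht =>
    legendreVar_mem_Icc hl ⟨(neg_one_lt_zero.trans ht.1).le, ht.2⟩

end LegendreMeasure

section Substitution

lemma integral_neg_self_of_even {f : ℝ → ℝ} (hf : f.Even) (c : ℝ) :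
    ∫ t in -c..c, f t = 2 * ∫ t in (0 : ℝ)..c, f t := by
  by_cases hint : IntervalIntegrable f volume 0 c
  · have hneg : ∫ t in -c..0, f t = ∫ t in (0 : ℝ)..c, f t := by
      simpa [hf _] using (intervalIntegral.integral_comp_neg f (a := 0) (b := c)).symm
    have hint_neg : IntervalIntegrable f volume (-c) 0 := by
      simpa [hf _] using ((IntervalIntegrable.iff_comp_neg).mp hint).symm
    rw [← intervalIntegral.integral_add_adjacent_intervals hint_neg hint, hneg, two_mul]
  · have hint' : ¬IntervalIntegrable f volume (-c) c := fun h => hint (h.mono_set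
      (uIcc_subset_uIcc_right (by rw [mem_uIcc]; grind)))
    rw [intervalIntegral.integral_undef hint, intervalIntegral.integral_undef hint', mul_zero]

lemma integral_comp_cayley {l : ℝ} (hl : l ∈ Ioo 0 1) (F : ℝ → ℝ) :
    ∫ s in (cayley l)⁻¹..cayley l, F s =
      ∫ t in (-1 : ℝ)..1, F (cayley (l * t)) * (2 * l / (1 - l * t) ^ 2) := by
  have hlt : ∀ t ∈ Icc (-1 : ℝ) 1, l * t ≠ 1 := fun t ht => by nlinarith [hl.1, hl.2, ht.2]
  have hderiv : ∀ t ∈ Icc (-1 : ℝ) 1,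
      HasDerivAt (fun t => cayley (l * t)) (2 * l / (1 - l * t) ^ 2) t := fun t ht => by
    have := (hasDerivAt_cayley (hlt t ht)).comp t ((hasDerivAt_id t).const_mul l)
    exact this.congr_deriv (by ring)
  have hle : (-1 : ℝ) ≤ 1 := by norm_num
  have hsubst := intervalIntegral.integral_comp_mul_deriv_of_deriv_nonneg (g := F)
    (f := fun t => cayley (l * t)) (f' := fun t => 2 * l / (1 - l * t) ^ 2) (a := -1) (b := 1)
    (fun t ht => (hderiv t (uIcc_of_le hle ▸ ht)).continuousAt.continuousWithinAt)
    (fun t ht => hderiv t (Ioo_subset_Icc_self (by simpa [hle] using ht)))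
    (fun t _ => by have := hl.1; positivity)
  simpa [cayley_neg] using hsubst.symm

end Substitution

section Reduction

variable {η α t : ℝ}

lemma lpar_sq_lt_one (hη : 1 < η) : lpar η ^ 2 < 1 :=
  pow_lt_one₀ (lpar_mem_Ioo hη).1.le (lpar_mem_Ioo hη).2 two_ne_zero

lemma joukowski_lt_joukowski (hη : 1 ≤ η) (hα : η < α) : joukowski η < joukowski α :=
  strictMonoOn_joukowski hη (hη.trans hα.le) hα

lemma two_lt_joukowski (hα : 1 < α) : 2 < joukowski α := by
  simpa [joukowski, one_add_one_eq_two] using joukowski_lt_joukowski le_rfl hα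

lemma legendreVar_lpar_lt (hη : 1 < η) (hα : η < α) (ht : t ∈ Icc (-1) 1) :
    legendreVar (lpar η) t < joukowski α := by
  have hle := (legendreVar_mem_Icc (lpar_sq_lt_one hη) ht).2
  rw [cayley_lpar (by linarith)] at hle
  exact hle.trans_lt (joukowski_lt_joukowski hη.le hα)

lemma ae_legendreVar_lpar_mem_Icc (hη : 1 < η) :
    ∀ᵐ t ∂legendreMeasure (lpar η), legendreVar (lpar η) t ∈ Icc 2 (joukowski η) := by
  simpa only [cayley_lpar (by linarith : η ≠ -1)] using
    ae_legendreVar_mem_Icc (lpar_sq_lt_one hη)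

lemma rpow_neg_half {x : ℝ} (hx : 0 ≤ x) : x ^ (-(1 / 2) : ℝ) = (√x)⁻¹ := by
  rw [rpow_neg hx, sqrt_eq_rpow]

lemma one_sub_kfun_sq_mul_sq (hη : 1 < η) (hα : 1 < α) (ht : t ∈ Icc (-1) 1) :
    1 - kfun η α ^ 2 * t ^ 2 = (joukowski α - legendreVar (lpar η) t)
      * (1 - lpar η ^ 2 * t ^ 2) / (joukowski α - 2) := by
  have hden := one_sub_sq_mul_sq_pos (lpar_sq_lt_one hη) ht
  have hA := two_lt_joukowski hα
  have : joukowski α - 2 ≠ 0 := by linarith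
  have : joukowski α + 2 ≠ 0 := by linarith
  rw [kfun, div_pow, lpar_sq (x := α) (by linarith), legendreVar_eq (lpar_sq_lt_one hη) ht]
  field_simp
  ring

lemma inv_sqrt_legendre_kfun (hη : 1 < η) (hα : η < α) (ht : t ∈ Icc (-1) 1) :
    (√((1 - t ^ 2) * (1 - kfun η α ^ 2 * t ^ 2)))⁻¹ = √(joukowski α - 2) *
      ((joukowski α - legendreVar (lpar η) t) ^ (-(1 / 2) : ℝ) /
        √((1 - t ^ 2) * (1 - lpar η ^ 2 * t ^ 2))) := by
  have hsub := sub_pos.mpr (legendreVar_lpar_lt hη hα ht)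
  have hA := two_lt_joukowski (hη.trans hα)
  rw [one_sub_kfun_sq_mul_sq hη (hη.trans hα) ht, rpow_neg_half hsub.le,
    show (1 - t ^ 2) * ((joukowski α - legendreVar (lpar η) t) * (1 - lpar η ^ 2 * t ^ 2)
      / (joukowski α - 2)) = (joukowski α - legendreVar (lpar η) t) *
        ((1 - t ^ 2) * (1 - lpar η ^ 2 * t ^ 2)) / (joukowski α - 2) by ring,
    sqrt_div' _ (by linarith), sqrt_mul hsub.le, inv_div, div_eq_mul_inv, mul_inv, div_eq_mul_inv]

lemma integral_legendre_kfun (hη : 1 < η) (hα : η < α) (g : ℝ → ℝ) :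
    ∫ t in (0 : ℝ)..1, g (legendreVar (lpar η) t) *
        (√((1 - t ^ 2) * (1 - kfun η α ^ 2 * t ^ 2)))⁻¹ =
      √(joukowski α - 2) * ∫ t, g (legendreVar (lpar η) t) *
        (joukowski α - legendreVar (lpar η) t) ^ (-(1 / 2) : ℝ) ∂legendreMeasure (lpar η) := by
  rw [integral_legendreMeasure, ← intervalIntegral.integral_const_mul]
  refine intervalIntegral.integral_congr fun t ht => ?_
  rw [uIcc_of_le zero_le_one] at ht
  simp only [inv_sqrt_legendre_kfun hη hα (Icc_subset_Icc_left neg_one_lt_zero.le ht)]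
  ring

lemma rho_radicand_cayley {l : ℝ} (hl : l ∈ Ioo 0 1) (hα : α ≠ 0) (ht : t ∈ Icc (-1) 1) :
    (cayley l - cayley (l * t)) * (cayley (l * t) - (cayley l)⁻¹) *
        (α - cayley (l * t)) * (cayley (l * t) - α⁻¹) =
      (2 * l / (1 - l * t) ^ 2) ^ 2 *
        ((1 - t ^ 2) * (1 - l ^ 2 * t ^ 2) / (1 - l ^ 2) * (joukowski α - legendreVar l t)) := by
  have hl2 : l ^ 2 < 1 := pow_lt_one₀ hl.1.le hl.2 two_ne_zero
  have hu : l * t ∈ Ioo (-1) 1 := by constructor <;> nlinarith [hl.1, hl.2, ht.1, ht.2]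
  have hu_ne : cayley (l * t) ≠ 0 := (cayley_pos hu).ne'
  have hl_ne : cayley l ≠ 0 := (cayley_pos ⟨by linarith [hl.1], hl.2⟩).ne'
  have : 0 < 1 - l * t := by linarith [hu.2]
  have : 0 < 1 + l * t := by linarith [hu.1]
  have : 0 < 1 - l ^ 2 := by linarith
  rw [mul_assoc _ (α - _), sub_mul_sub_inv hl_ne hu_ne, sub_mul_sub_inv hα hu_ne, ← legendreVar,
    joukowski_cayley_sub_legendreVar hl2 ht,
    show 1 - l ^ 2 * t ^ 2 = (1 - l * t) * (1 + l * t) by ring, cayley]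
  field_simp
  ring

lemma rho_cayley {l : ℝ} (hl : l ∈ Ioo 0 1) (hα : α ≠ 0) (ht : t ∈ Icc (-1) 1) :
    rho (cayley l) α (cayley (l * t)) = 2 * l / (1 - l * t) ^ 2 *
      (√(joukowski α - legendreVar l t) * √((1 - t ^ 2) * (1 - l ^ 2 * t ^ 2)) /
        √(1 - l ^ 2)) := by
  have hl2 : l ^ 2 < 1 := pow_lt_one₀ hl.1.le hl.2 two_ne_zero
  have hweight : 0 ≤ (1 - t ^ 2) * (1 - l ^ 2 * t ^ 2) :=
    mul_nonneg (by nlinarith [ht.1, ht.2]) (one_sub_sq_mul_sq_pos hl2 ht).le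
  have hjac : 0 ≤ 2 * l / (1 - l * t) ^ 2 := div_nonneg (by linarith [hl.1]) (sq_nonneg _)
  rw [rho, rho_radicand_cayley hl hα ht, sqrt_mul (sq_nonneg _), sqrt_sq hjac,
    sqrt_mul (div_nonneg hweight (by linarith)), sqrt_div hweight]
  ring

lemma deriv_div_rho_cayley (hη : 1 < η) (hα : η < α) (ht : t ∈ Icc (-1) 1) :
    2 * lpar η / (1 - lpar η * t) ^ 2 / rho η α (cayley (lpar η * t)) = √(1 - lpar η ^ 2) *
      ((joukowski α - legendreVar (lpar η) t) ^ (-(1 / 2) : ℝ) /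
        √((1 - t ^ 2) * (1 - lpar η ^ 2 * t ^ 2))) := by
  have hl := lpar_mem_Ioo hη
  have hm : 0 < 1 - lpar η * t := by nlinarith [hl.1, hl.2, ht.2]
  have hjac : 2 * lpar η / (1 - lpar η * t) ^ 2 ≠ 0 :=
    (div_pos (by linarith [hl.1]) (pow_pos hm 2)).ne'
  have hrho := rho_cayley hl (by linarith : α ≠ 0) ht
  rw [cayley_lpar (by linarith)] at hrho
  rw [hrho, div_mul_cancel_left₀ hjac,
    rpow_neg_half (sub_pos.mpr (legendreVar_lpar_lt hη hα ht)).le]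
  field_simp

lemma integral_comp_joukowski_div_rho (hη : 1 < η) (hα : η < α) (g : ℝ → ℝ) :
    ∫ s in η⁻¹..η, g (joukowski s) / rho η α s =
      2 * √(1 - lpar η ^ 2) * ∫ t, g (legendreVar (lpar η) t) *
        (joukowski α - legendreVar (lpar η) t) ^ (-(1 / 2) : ℝ) ∂legendreMeasure (lpar η) := by
  have hsubst := integral_comp_cayley (lpar_mem_Ioo hη) fun s => g (joukowski s) / rho η α s
  rw [cayley_lpar (by linarith)] at hsubst
  have hcongr : ∀ t ∈ uIcc (-1 : ℝ) 1, g (joukowski (cayley (lpar η * t))) /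
      rho η α (cayley (lpar η * t)) * (2 * lpar η / (1 - lpar η * t) ^ 2) =
      √(1 - lpar η ^ 2) * (g (legendreVar (lpar η) t) *
        (joukowski α - legendreVar (lpar η) t) ^ (-(1 / 2) : ℝ) /
          √((1 - t ^ 2) * (1 - lpar η ^ 2 * t ^ 2))) := fun t ht => by
    rw [uIcc_of_le (by norm_num)] at ht
    rw [div_mul_eq_mul_div, mul_div_assoc, deriv_div_rho_cayley hη hα ht, ← legendreVar]
    ring
  rw [hsubst, intervalIntegral.integral_congr hcongr, intervalIntegral.integral_const_mul,
    integral_neg_self_of_even (fun t => by simp only [legendreVar_even _ t, neg_sq]) 1,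
    integral_legendreMeasure]
  ring

end Reduction

section Moments

variable {η α A : ℝ}

/-- The moment `∫ (A - X)^p dμ` of the Legendre variable `X` with respect to the Legendre measure
`μ` of modulus `lpar η`. -/
noncomputable def legendreMoment (η p A : ℝ) : ℝ :=
  shiftedMoment (legendreMeasure (lpar η)) (legendreVar (lpar η)) p A

lemma legendreMoment_pos (hη : 1 < η) (hA : joukowski η < A) (p : ℝ) :
    0 < legendreMoment η p A := by
  have := isFiniteMeasure_legendreMeasure (lpar_sq_lt_one hη)
  have := neZero_legendreMeasure (lpar_sq_lt_one hη)
  exact shiftedMoment_pos (measurable_legendreVar _).aemeasurable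
    (ae_legendreVar_lpar_mem_Icc hη) hA p

lemma ellK_kfun (hη : 1 < η) (hα : η < α) :
    ellK (kfun η α) = √(joukowski α - 2) * legendreMoment η (-(1 / 2)) (joukowski α) := by
  simpa [ellK, legendreMoment, shiftedMoment] using integral_legendre_kfun hη hα fun _ => 1

lemma ellPi_kfun (hη : 1 < η) (hα : η < α) :
    ellPi (lpar η ^ 2) (kfun η α) = √(joukowski α - 2) *
      (((joukowski α + 2) * legendreMoment η (-(1 / 2)) (joukowski α)
        - legendreMoment η (1 / 2) (joukowski α)) / 4) := by
  have := isFiniteMeasure_legendreMeasure (lpar_sq_lt_one hη)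
  have hmoment := integral_add_const_mul_sub_rpow (measurable_legendreVar _).aemeasurable
    (ae_legendreVar_lpar_mem_Icc hη) (joukowski_lt_joukowski hη.le hα) 2 (-(1 / 2))
  rw [show -(1 / 2) + 1 = (1 / 2 : ℝ) by norm_num] at hmoment
  have hcongr : ∀ t ∈ uIcc (0 : ℝ) 1,
      1 / ((1 - lpar η ^ 2 * t ^ 2) * √((1 - t ^ 2) * (1 - kfun η α ^ 2 * t ^ 2))) =
        (legendreVar (lpar η) t + 2) * (√((1 - t ^ 2) * (1 - kfun η α ^ 2 * t ^ 2)))⁻¹ / 4 :=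
    fun t ht => by
      rw [uIcc_of_le zero_le_one] at ht
      rw [legendreVar_eq (lpar_sq_lt_one hη) (Icc_subset_Icc_left neg_one_lt_zero.le ht),
        one_div, mul_inv]
      ring
  rw [ellPi, intervalIntegral.integral_congr hcongr, intervalIntegral.integral_div,
    integral_legendre_kfun hη hα (· + 2), hmoment, mul_div_assoc]
  rfl

lemma integral_one_div_rho (hη : 1 < η) (hα : η < α) :
    ∫ s in η⁻¹..η, 1 / rho η α s =
      2 * √(1 - lpar η ^ 2) * legendreMoment η (-(1 / 2)) (joukowski α) := by
  simpa [legendreMoment, shiftedMoment] using integral_comp_joukowski_div_rho hη hα fun _ => 1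

lemma integral_sq_add_inv_sq_div_rho (hη : 1 < η) (hα : η < α) :
    ∫ s in η⁻¹..η, (s ^ 2 + s⁻¹ ^ 2) / rho η α s =
      2 * √(1 - lpar η ^ 2) *
        ((joukowski α ^ 2 - 2) * legendreMoment η (-(1 / 2)) (joukowski α)
          - 2 * joukowski α * legendreMoment η (1 / 2) (joukowski α)
          + legendreMoment η (3 / 2) (joukowski α)) := by
  have := isFiniteMeasure_legendreMeasure (lpar_sq_lt_one hη)
  have hmoment := integral_sq_add_const_mul_sub_rpow (measurable_legendreVar _).aemeasurable
    (ae_legendreVar_lpar_mem_Icc hη) (joukowski_lt_joukowski hη.le hα) (-2) (-(1 / 2))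
  rw [show -(1 / 2) + 1 = (1 / 2 : ℝ) by norm_num,
    show -(1 / 2) + 2 = (3 / 2 : ℝ) by norm_num] at hmoment
  have hcongr : ∀ s ∈ uIcc η⁻¹ η,
      (s ^ 2 + s⁻¹ ^ 2) / rho η α s = (joukowski s ^ 2 + -2) / rho η α s := fun s hs => by
    rw [uIcc_of_le ((inv_lt_one_of_one_lt₀ hη).trans hη).le] at hs
    have hs_pos : 0 < s := (inv_pos.mpr (by linarith)).trans_le hs.1
    rw [sq_add_inv_sq hs_pos.ne', sub_eq_add_neg]
  rw [intervalIntegral.integral_congr hcongr,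
    integral_comp_joukowski_div_rho hη hα (· ^ 2 + -2), hmoment]
  rfl

theorem Qfun_eq (hη : 1 < η) (hα : η < α) :
    Qfun η α = joukowski α ^ 2 - 2
      - 2 * joukowski α * (legendreMoment η (1 / 2) (joukowski α) /
        legendreMoment η (-(1 / 2)) (joukowski α))
      + legendreMoment η (3 / 2) (joukowski α) / legendreMoment η (-(1 / 2)) (joukowski α) := by
  have hpos := legendreMoment_pos hη (joukowski_lt_joukowski hη.le hα) (-(1 / 2))
  have hsqrt : 0 < √(1 - lpar η ^ 2) := sqrt_pos.mpr (sub_pos.mpr (lpar_sq_lt_one hη))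
  rw [Qfun, integral_one_div_rho hη hα, integral_sq_add_inv_sq_div_rho hη hα]
  field_simp

theorem Dfun_eq (hη : 1 < η) (hα : η < α) :
    Dfun η α = legendreMoment η (1 / 2) (joukowski α) /
      legendreMoment η (-(1 / 2)) (joukowski α) := by
  have hpos := legendreMoment_pos hη (joukowski_lt_joukowski hη.le hα) (-(1 / 2))
  have hsqrt : 0 < √(joukowski α - 2) :=
    sqrt_pos.mpr (sub_pos.mpr (two_lt_joukowski (hη.trans hα)))
  rw [Dfun, ellK_kfun hη hα, ellPi_kfun hη hα, ← joukowski]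
  field_simp
  ring

theorem Nfun_div_Dfun_eq (hη : 1 < η) (hα : η < α) :
    Nfun η α / Dfun η α = legendreMoment η (3 / 2) (joukowski α) /
      legendreMoment η (1 / 2) (joukowski α) - 3 / 2 * joukowski α + joukowski η / 2 := by
  have hA := joukowski_lt_joukowski hη.le hα
  have hden := legendreMoment_pos hη hA (-(1 / 2))
  have hnum := legendreMoment_pos hη hA (1 / 2)
  have hsq : -α ^ 2 - α⁻¹ ^ 2 = 2 - joukowski α ^ 2 := by
    linear_combination -sq_add_inv_sq (s := α) (by linarith)
  have hsum : α + α⁻¹ + η + η⁻¹ = joukowski α + joukowski η := by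
    simp only [joukowski, add_assoc]
  rw [Nfun, hsq, hsum, Qfun_eq hη hα, Dfun_eq hη hα]
  field_simp
  ring

theorem Dfun_pos (hη : 1 < η) (hα : η < α) : 0 < Dfun η α := by
  have hA := joukowski_lt_joukowski hη.le hα
  rw [Dfun_eq hη hα]
  exact div_pos (legendreMoment_pos hη hA _) (legendreMoment_pos hη hA _)

lemma strictMonoOn_legendreMoment_half_div (hη : 1 < η) :
    StrictMonoOn (fun A => legendreMoment η (1 / 2) A / legendreMoment η (-(1 / 2)) A)
      (Ioi (joukowski η)) := by
  have := isFiniteMeasure_legendreMeasure (lpar_sq_lt_one hη)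
  have := neZero_legendreMeasure (lpar_sq_lt_one hη)
  have hmono := strictMonoOn_shiftedMoment_add_one_div (p := -(1 / 2))
    (measurable_legendreVar _).aemeasurable (ae_legendreVar_lpar_mem_Icc hη) (by norm_num)
  rwa [show -(1 / 2) + 1 = (1 / 2 : ℝ) by norm_num] at hmono

lemma strictAntiOn_legendreMoment_three_halves_div_sub (hη : 1 < η) :
    StrictAntiOn
      (fun A => legendreMoment η (3 / 2) A / legendreMoment η (1 / 2) A - 3 / 2 * A)
      (Ioi (joukowski η)) := by
  have := isFiniteMeasure_legendreMeasure (lpar_sq_lt_one hη)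
  have := neZero_legendreMeasure (lpar_sq_lt_one hη)
  have hanti := strictAntiOn_shiftedMoment_add_one_div_sub (p := 1 / 2)
    (measurable_legendreVar _).aemeasurable (ae_legendreVar_lpar_mem_Icc hη) (by norm_num)
  rwa [show 1 / 2 + 1 = (3 / 2 : ℝ) by norm_num] at hanti

theorem strictMonoOn_Dfun (hη : 1 < η) : StrictMonoOn (Dfun η) (Ioi η) := by
  intro α (hα : η < α) β (hβ : η < β) hαβ
  rw [Dfun_eq hη hα, Dfun_eq hη hβ]
  exact strictMonoOn_legendreMoment_half_div hη (joukowski_lt_joukowski hη.le hα)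
    (joukowski_lt_joukowski hη.le hβ) (joukowski_lt_joukowski (hη.trans hα).le hαβ)

theorem strictAntiOn_Nfun_div_Dfun (hη : 1 < η) :
    StrictAntiOn (fun α => Nfun η α / Dfun η α) (Ioi η) := by
  intro α (hα : η < α) β (hβ : η < β) hαβ
  simp only [Nfun_div_Dfun_eq hη hα, Nfun_div_Dfun_eq hη hβ, add_lt_add_iff_right]
  exact strictAntiOn_legendreMoment_three_halves_div_sub hη (joukowski_lt_joukowski hη.le hα)
    (joukowski_lt_joukowski hη.le hβ) (joukowski_lt_joukowski (hη.trans hα).le hαβ)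

end Moments

theorem stmt17 (η₁ η₂ : ℝ) (h1 : 1 < η₁) (h2 : η₁ < η₂) :
    (∀ α ∈ Set.Ioo η₁ η₂, 0 < Dfun η₁ α) ∧
    StrictMonoOn (Dfun η₁) (Set.Ioo η₁ η₂) ∧
    StrictAntiOn (fun α => Nfun η₁ α / Dfun η₁ α) (Set.Ioo η₁ η₂) :=
  ⟨fun _ hα => Dfun_pos h1 hα.1,
    (strictMonoOn_Dfun h1).mono Ioo_subset_Ioi_self,
    (strictAntiOn_Nfun_div_Dfun h1).mono Ioo_subset_Ioi_self⟩
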